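/- arXiv:1911.09564 — 3 statements merged into one kernel-verified Lean document; each statement's English description precedes it below -/
import Mathlib

section
/- Regret decomposition for the magnitude-direction reduction: Let d ≥ 1, T ≥ 1, and let ĝ_1,…,ĝ_T ∈ ℝ^d, q_1,…,q_T ∈ ℝ^d, and m_1,…,m_T ∈ ℝ be arbitrary. For t = 1,…,T set s_t = ⟨ĝ_t, q_t⟩. Then for every u ∈ ℝ^d, ∑_{t=1}^T ⟨ĝ_t, u − m_t q_t⟩ = ∑_{t=1}^T s_t (‖u‖₂ − m_t) + ‖u‖₂ ∑_{t=1}^T ⟨ĝ_t, u/‖u‖₂ − q_t⟩, where u/‖u‖₂ is taken to be the zero vector when u = 0. In particular, the regret of the combined iterates m_t q_t against any comparator u is bounded by the magnitude learner's regret against ‖u‖₂ plus ‖u‖₂ times the direction learner's regret against u/‖u‖₂. -/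
open scoped Classical
open Finset
open scoped RealInnerProductSpace

/-- **Regret decomposition for the magnitude-direction reduction.**
For arbitrary vectors `ĝ_t, q_t ∈ ℝ^d`, scalars `m_t`, with `s_t = ⟪ĝ_t, q_t⟫`,
and any comparator `u`, the total regret of the combined iterates `m_t • q_t`
decomposes exactly as the magnitude regret against `‖u‖` plus `‖u‖` times the
direction regret against `u / ‖u‖` (taken to be `0` when `u = 0`). -/
theorem banco_regret_decomposition
    (d T : ℕ) (hd : 1 ≤ d) (hT : 1 ≤ T)
    (ghat q : Fin T → EuclideanSpace ℝ (Fin d)) (m : Fin T → ℝ)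
    (s : Fin T → ℝ) (hs : ∀ t, s t = ⟪ghat t, q t⟫)
    (u : EuclideanSpace ℝ (Fin d)) :
    ∑ t : Fin T, ⟪ghat t, u - m t • q t⟫
      = (∑ t : Fin T, s t * (‖u‖ - m t))
        + ‖u‖ * ∑ t : Fin T, ⟪ghat t, (if u = 0 then 0 else ‖u‖⁻¹ • u) - q t⟫ ∧
    ∑ t : Fin T, ⟪ghat t, u - m t • q t⟫
      ≤ (∑ t : Fin T, s t * (‖u‖ - m t))
        + ‖u‖ * ∑ t : Fin T, ⟪ghat t, (if u = 0 then 0 else ‖u‖⁻¹ • u) - q t⟫ := by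
  refine (fun h => ⟨h, h.le⟩) ?_
  rw [Finset.mul_sum, ← Finset.sum_add_distrib]
  refine Finset.sum_congr rfl fun t _ => ?_
  by_cases hu : u = 0
  · subst hu
    simp [hs, inner_sub_right, inner_smul_right]
    ring
  · have hn : ‖u‖ ≠ 0 := norm_ne_zero_iff.mpr hu
    rw [if_neg hu, hs, inner_sub_right, inner_sub_right, inner_smul_right, inner_smul_right]
    field_simp
    ring
end

section
/- Sub-exponential tail bound for the multivariate Laplace-type noise: Fix ε > 0 and d ≥ 1, and let ξ be a random vector in ℝ^d with probability density proportional to exp(−(ε/2)‖z‖₂). Then max_{‖a‖₂≤1} E[exp(β⟨ξ,a⟩)] ≤ exp(β² σ_1D²/2) holds for all β ∈ ℝ with |β| ≤ 1/b, where σ_1D² = 18 d²/ε² and b = 4/ε; that is, ξ is sub-exponential with parameters (σ_1D², b) = (18 d²/ε², 4/ε). -/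
open MeasureTheory
open scoped RealInnerProductSpace

lemma aux_inv_le (t : ℝ) (ht : |t| ≤ 1 / 2) : (1 - t)⁻¹ ≤ Real.exp (t + t ^ 2) := by
  obtain ⟨h1, h2⟩ := abs_le.mp ht
  have hp : 0 < 1 - t := by linarith
  rw [inv_le_iff_one_le_mul₀ hp]
  rcases le_total 0 t with h | h
  · have := Real.quadratic_le_exp_of_nonneg (x := t + t ^ 2) (by positivity)
    have h3 : 1 ≤ (1 + (t + t ^ 2) + (t + t ^ 2) ^ 2 / 2) * (1 - t) := by
      have h4 : 0 ≤ (1 - t) * (1 + t) ^ 2 / 2 - t := by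
        nlinarith [mul_nonneg h (by linarith : (0 : ℝ) ≤ 1 / 2 - t), sq_nonneg t,
          mul_nonneg (mul_nonneg h h) (by linarith : (0 : ℝ) ≤ 1 / 2 - t)]
      nlinarith [mul_nonneg (sq_nonneg t) h4]
    nlinarith [mul_le_mul_of_nonneg_right this hp.le]
  · have := Real.add_one_le_exp (t + t ^ 2)
    have h3 : 1 ≤ (t + t ^ 2 + 1) * (1 - t) := by
      nlinarith [mul_nonneg (sq_nonneg t) (by linarith : 0 ≤ -t)]
    nlinarith [mul_le_mul_of_nonneg_right this hp.le]

lemma aux_avg (t : ℝ) (ht : |t| ≤ 1 / 2) (d : ℕ) (hd : 1 ≤ d) :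
    ((1 - t)⁻¹ ^ d + (1 + t)⁻¹ ^ d) / 2 ≤ Real.exp (9 * (d : ℝ) ^ 2 * t ^ 2 / 4) := by
  obtain ⟨h1, h2⟩ := abs_le.mp ht
  have hA : (1 - t)⁻¹ ^ d ≤ Real.exp (d * (t + t ^ 2)) := by
    rw [Real.exp_nat_mul]
    exact pow_le_pow_left₀ (inv_nonneg.mpr (by linarith)) (aux_inv_le t ht) d
  have hB : (1 + t)⁻¹ ^ d ≤ Real.exp (d * (-t + t ^ 2)) := by
    rw [Real.exp_nat_mul]
    have := aux_inv_le (-t) (by simpa using ht)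
    rw [sub_neg_eq_add, neg_sq] at this
    exact pow_le_pow_left₀ (inv_nonneg.mpr (by linarith)) this d
  have hC := Real.cosh_le_exp_half_sq (d * t)
  have hd' : (1 : ℝ) ≤ d := by exact_mod_cast hd
  calc _ ≤ (Real.exp (d * (t + t ^ 2)) + Real.exp (d * (-t + t ^ 2))) / 2 := by linarith
    _ = Real.exp (d * t ^ 2) * Real.cosh (d * t) := by
      rw [Real.cosh_eq, mul_div_assoc', mul_add (Real.exp _), ← Real.exp_add, ← Real.exp_add]
      congr 3 <;> ring_nf
    _ ≤ Real.exp (d * t ^ 2) * Real.exp ((d * t) ^ 2 / 2) := by gcongr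
    _ = Real.exp (d * t ^ 2 + (d * t) ^ 2 / 2) := by rw [Real.exp_add]
    _ ≤ _ := by
      apply Real.exp_le_exp.mpr
      nlinarith [sq_nonneg t, mul_nonneg (mul_nonneg (sub_nonneg.mpr hd') (by linarith : (0 : ℝ) ≤ d)) (sq_nonneg t), mul_nonneg (sq_nonneg t) (sq_nonneg (d : ℝ))]

/-- **Sub-exponential tail bound for the multivariate Laplace-type noise.**
If `ξ` is a random vector in `ℝ^d` whose law `μ` is the probability measure with
density proportional to `exp (-(ε/2) * ‖z‖)` with respect to Lebesgue measure, then
for every direction `a` with `‖a‖₂ ≤ 1` and every `β` with `|β| ≤ 1/b = ε/4`, the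
moment generating function satisfies
`E[exp (β ⟪ξ, a⟫)] ≤ exp (β² σ₁D² / 2)` with `σ₁D² = 18 d² / ε²`. -/
theorem laplace_noise_sub_exponential
    (ε : ℝ) (hε : 0 < ε) (d : ℕ) (hd : 1 ≤ d)
    (C : ℝ) (hC : 0 < C)
    (μ : Measure (EuclideanSpace ℝ (Fin d)))
    (hμ : μ = volume.withDensity
      (fun z => ENNReal.ofReal (C * Real.exp (-(ε / 2) * ‖z‖))))
    (hprob : IsProbabilityMeasure μ) :
    ∀ a : EuclideanSpace ℝ (Fin d), ‖a‖ ≤ 1 →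
      ∀ β : ℝ, |β| ≤ ε / 4 →
        ∫ z, Real.exp (β * ⟪z, a⟫) ∂μ
          ≤ Real.exp (β ^ 2 * (18 * (d : ℝ) ^ 2 / ε ^ 2) / 2) := by
  intro a ha β hβ
  obtain ⟨hβ1, hβ2⟩ := abs_le.mp hβ
  set g : EuclideanSpace ℝ (Fin d) → ℝ := fun z => C * Real.exp (-(ε / 2) * ‖z‖) with hg
  have hg0 : ∀ z, 0 ≤ g z := fun z => by positivity
  have hgc : Continuous g := by fun_prop
  have hlint : ∫⁻ z, ENNReal.ofReal (g z) = 1 := by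
    have := hprob.measure_univ
    rwa [hμ, withDensity_apply _ MeasurableSet.univ, Measure.restrict_univ] at this
  have hgi : Integrable g := by
    refine ⟨hgc.aestronglyMeasurable, ?_⟩
    rw [hasFiniteIntegral_iff_ofReal (Filter.Eventually.of_forall hg0), hlint]
    exact ENNReal.one_lt_top
  have hgint : ∫ z, g z = 1 := by
    rw [integral_eq_lintegral_of_nonneg_ae (Filter.Eventually.of_forall hg0)
      hgc.aestronglyMeasurable, hlint]
    simp
  set t : ℝ := 2 * β / ε with ht
  have hβt : β = t * (ε / 2) := by rw [ht]; field_simp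
  have htabs : |t| ≤ 1 / 2 := by
    rw [abs_le, ht, le_div_iff₀ hε, div_le_iff₀ hε]
    constructor <;> linarith
  obtain ⟨ht1, ht2⟩ := abs_le.mp htabs
  have hscale : ∀ s : ℝ, 0 < s → Integrable (fun z => g (s • z)) ∧
      ∫ z, g (s • z) = s⁻¹ ^ d := by
    intro s hs
    refine ⟨(integrable_comp_smul_iff volume g hs.ne').mpr hgi, ?_⟩
    rw [Measure.integral_comp_smul, hgint, abs_of_pos (by positivity)]
    simp
  obtain ⟨hi1, hI1⟩ := hscale (1 - t) (by linarith)
  obtain ⟨hi2, hI2⟩ := hscale (1 + t) (by linarith)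
  have hgs : ∀ s : ℝ, 0 < s → ∀ z, g (s • z) = g z * Real.exp ((1 - s) * (ε / 2) * ‖z‖) := by
    intro s hs z
    simp only [hg]
    rw [norm_smul, Real.norm_of_nonneg hs.le, mul_assoc, ← Real.exp_add]
    congr 2; ring
  set f : EuclideanSpace ℝ (Fin d) → ℝ := fun z => g z * Real.exp (β * ⟪z, a⟫) with hf
  have hf0 : ∀ z, 0 ≤ f z := fun z => mul_nonneg (hg0 z) (Real.exp_pos _).le
  have hfc : Continuous f := by fun_prop
  have hLHS : ∫ z, Real.exp (β * ⟪z, a⟫) ∂μ = ∫ z, f z := by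
    rw [hμ, integral_withDensity_eq_integral_toReal_smul (by fun_prop) (by simp)]
    refine integral_congr_ae (Filter.Eventually.of_forall fun z => ?_)
    simp only [hf, smul_eq_mul]
    rw [ENNReal.toReal_ofReal (hg0 z)]
  have hpt : ∀ z, f z + f (-z) ≤ g ((1 - t) • z) + g ((1 + t) • z) := by
    intro z
    rw [hgs _ (by linarith), hgs _ (by linarith)]
    have hc : Real.cosh (β * ⟪z, a⟫) ≤ Real.cosh (β * ‖z‖) := by
      rw [Real.cosh_le_cosh, abs_mul, abs_mul, abs_norm]
      gcongr
      calc |⟪z, a⟫| ≤ ‖z‖ * ‖a‖ := abs_real_inner_le_norm z a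
        _ ≤ ‖z‖ * 1 := by gcongr
        _ = ‖z‖ := mul_one _
    have hgn : g (-z) = g z := by simp [hg]
    simp only [hf]
    rw [hgn, ← mul_add, ← mul_add]
    apply mul_le_mul_of_nonneg_left _ (hg0 z)
    rw [Real.cosh_eq, Real.cosh_eq] at hc
    have e1 : (1 - (1 - t)) * (ε / 2) * ‖z‖ = β * ‖z‖ := by rw [hβt]; ring
    have e2 : (1 - (1 + t)) * (ε / 2) * ‖z‖ = -(β * ‖z‖) := by rw [hβt]; ring
    rw [e1, e2, inner_neg_left, mul_neg]
    linarith
  have hfi : Integrable f := by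
    refine (hi1.add hi2).mono' hfc.aestronglyMeasurable (Filter.Eventually.of_forall fun z => ?_)
    rw [Real.norm_of_nonneg (hf0 z)]
    have := hpt z
    have := hf0 (-z)
    simp only [Pi.add_apply]
    linarith
  have hneg : ∫ z, f (-z) = ∫ z, f z := integral_neg_eq_self f volume
  have hmono := integral_mono (hfi.add hfi.comp_neg) (hi1.add hi2) hpt
  have e3 := integral_add hfi hfi.comp_neg
  have e4 := integral_add hi1 hi2
  simp only [Pi.add_apply] at hmono
  rw [e3, e4, hneg, hI1, hI2] at hmono
  have hfin := aux_avg t htabs d hd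
  rw [hLHS]
  have e5 : β ^ 2 * (18 * (d : ℝ) ^ 2 / ε ^ 2) / 2 = 9 * (d : ℝ) ^ 2 * t ^ 2 / 4 := by
    rw [ht]; field_simp; ring
  rw [e5]
  linarith
end

section
/- Regret of scale-free projected online gradient descent on the unit ball: Let g_1,…,g_T ∈ ℝ^d with not all g_t zero. Define iterates q_1 = 0 and, for t ≥ 1, q_{t+1} = Π_B( q_t + g_t / √(∑_{s=1}^t ‖g_s‖₂²) ), where Π_B denotes Euclidean projection onto the closed unit ball B ⊆ ℝ^d and the step is taken to be 0 whenever ∑_{s=1}^t ‖g_s‖₂² = 0. Then for every comparator u with ‖u‖₂ ≤ 1, ∑_{t=1}^T ⟨g_t, u − q_t⟩ ≤ 3 √(∑_{t=1}^T ‖g_t‖₂²). -/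
open Finset
open scoped RealInnerProductSpace

/-- Euclidean projection onto the closed unit ball of `ℝ^d`. -/
noncomputable def projUnitBall {d : ℕ} (x : EuclideanSpace ℝ (Fin d)) :
    EuclideanSpace ℝ (Fin d) :=
  (max 1 ‖x‖)⁻¹ • x

theorem projUnitBall_norm_le {d : ℕ} (x : EuclideanSpace ℝ (Fin d)) :
    ‖projUnitBall x‖ ≤ 1 := by
  have hm : 0 < max 1 ‖x‖ := lt_of_lt_of_le one_pos (le_max_left _ _)
  rw [projUnitBall, norm_smul, norm_inv, Real.norm_of_nonneg hm.le, inv_mul_le_iff₀ hm, mul_one]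
  exact le_max_right _ _

theorem projUnitBall_dist {d : ℕ} (u x : EuclideanSpace ℝ (Fin d)) (hu : ‖u‖ ≤ 1) :
    ‖u - projUnitBall x‖ ^ 2 ≤ ‖u - x‖ ^ 2 := by
  rcases le_total ‖x‖ 1 with h | h
  · simp [projUnitBall, max_eq_left h]
  · have hx : 0 < ‖x‖ := lt_of_lt_of_le one_pos h
    rw [projUnitBall, max_eq_right h, norm_sub_sq_real, norm_sub_sq_real, norm_smul, norm_inv,
      norm_norm, inv_mul_cancel₀ hx.ne', real_inner_smul_right]
    have h1 : ⟪u, x⟫ ≤ ‖x‖ := (real_inner_le_norm u x).trans (by nlinarith)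
    have h2 : ‖x‖⁻¹ ≤ 1 := inv_le_one_of_one_le₀ h
    have h3 : ‖x‖⁻¹ * ‖x‖ = 1 := inv_mul_cancel₀ hx.ne'
    nlinarith [mul_le_mul_of_nonneg_left h1 (sub_nonneg.2 h2), sq_nonneg (‖x‖ - 1)]

/-- **Regret of scale-free projected online gradient descent on the unit ball.**
With `q 0 = 0` (this is `q_1`) and
`q (t+1) = Π_B (q t + g t / √(∑_{s ≤ t} ‖g s‖²))` (step taken to be `0` when the
denominator vanishes), for every comparator `u` in the unit ball,
`∑_{t<T} ⟪g t, u - q t⟫ ≤ 3 √(∑_{t<T} ‖g t‖²)`, provided not all `g t`, `t < T`, vanish. -/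
theorem scale_free_ogd_regret
    (d T : ℕ) (g : ℕ → EuclideanSpace ℝ (Fin d))
    (hg : ¬ ∀ t < T, g t = 0)
    (q : ℕ → EuclideanSpace ℝ (Fin d))
    (hq0 : q 0 = 0)
    (hq : ∀ t, q (t + 1) =
      projUnitBall (q t +
        (if (∑ s ∈ Finset.range (t + 1), ‖g s‖ ^ 2) = 0 then 0
         else (Real.sqrt (∑ s ∈ Finset.range (t + 1), ‖g s‖ ^ 2))⁻¹ • g t)))
    (u : EuclideanSpace ℝ (Fin d)) (hu : ‖u‖ ≤ 1) :
    ∑ t ∈ Finset.range T, ⟪g t, u - q t⟫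
      ≤ 3 * Real.sqrt (∑ t ∈ Finset.range T, ‖g t‖ ^ 2) := by
  have hqn : ∀ t, ‖q t‖ ≤ 1 := by
    intro t
    cases t with
    | zero => simp [hq0]
    | succ t => rw [hq]; exact projUnitBall_norm_le _
  have key : ∀ n, ∑ t ∈ Finset.range n, ⟪g t, u - q t⟫
      + Real.sqrt (∑ t ∈ Finset.range n, ‖g t‖ ^ 2) / 2 * ‖u - q n‖ ^ 2
      ≤ 3 * Real.sqrt (∑ t ∈ Finset.range n, ‖g t‖ ^ 2) := by
    intro n
    induction n with
    | zero => simp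
    | succ n ih =>
      have hP := projUnitBall_dist u (q n +
        (if (∑ s ∈ Finset.range (n + 1), ‖g s‖ ^ 2) = 0 then 0
         else (Real.sqrt (∑ s ∈ Finset.range (n + 1), ‖g s‖ ^ 2))⁻¹ • g n)) hu
      rw [← hq n] at hP
      have hA : 0 ≤ ∑ t ∈ Finset.range n, ‖g t‖ ^ 2 := Finset.sum_nonneg fun _ _ => by positivity
      have hB : 0 ≤ ∑ t ∈ Finset.range (n + 1), ‖g t‖ ^ 2 :=
        Finset.sum_nonneg fun _ _ => by positivity
      have hs := Finset.sum_range_succ (fun t => ‖g t‖ ^ 2) n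
      rw [Finset.sum_range_succ (fun t => ⟪g t, u - q t⟫) n]
      have hD : ‖u - q n‖ ≤ 2 := (norm_sub_le _ _).trans (by linarith [hqn n])
      have hD2 : ‖u - q n‖ ^ 2 ≤ 4 := by nlinarith [norm_nonneg (u - q n)]
      generalize (∑ t ∈ Finset.range (n + 1), ‖g t‖ ^ 2) = B at *
      generalize (∑ t ∈ Finset.range n, ‖g t‖ ^ 2) = A at *
      generalize (∑ t ∈ Finset.range n, ⟪g t, u - q t⟫) = R at *
      by_cases h0 : B = 0
      · have hg0 : g n = 0 := by
          have : ‖g n‖ ^ 2 = 0 := by nlinarith [sq_nonneg ‖g n‖]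
          simpa using this
        have hA0 : A = 0 := by nlinarith [sq_nonneg ‖g n‖]
        subst hA0
        subst h0
        simp [hg0] at ih ⊢
        exact ih
      · rw [if_neg h0] at hP
        have ha : 0 < Real.sqrt B := Real.sqrt_pos.2 (lt_of_le_of_ne hB (Ne.symm h0))
        have hb : 0 ≤ Real.sqrt A := Real.sqrt_nonneg A
        have hab : Real.sqrt A ≤ Real.sqrt B :=
          Real.sqrt_le_sqrt (by nlinarith [sq_nonneg ‖g n‖])
        have ha2 := Real.sq_sqrt hB
        have hb2 := Real.sq_sqrt hA
        generalize Real.sqrt B = a at *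
        generalize Real.sqrt A = b at *
        rw [← sub_sub, norm_sub_sq_real (u - q n), norm_smul, norm_inv,
          Real.norm_of_nonneg ha.le, real_inner_smul_right, real_inner_comm, mul_pow,
          show ‖g n‖ ^ 2 = a ^ 2 - b ^ 2 by linarith] at hP
        have e : a / 2 * ‖u - q (n + 1)‖ ^ 2 ≤ a / 2 * ‖u - q n‖ ^ 2 - ⟪g n, u - q n⟫
            + (a ^ 2 - b ^ 2) / (2 * a) := by
          refine (mul_le_mul_of_nonneg_left hP (by positivity)).trans (le_of_eq ?_)
          field_simp
        have e2 : (a ^ 2 - b ^ 2) / (2 * a) ≤ a - b := by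
          rw [div_le_iff₀ (by positivity)]
          nlinarith
        nlinarith [mul_le_mul_of_nonneg_left hD2 (sub_nonneg.2 hab)]
  have hk := key T
  have : 0 ≤ Real.sqrt (∑ t ∈ Finset.range T, ‖g t‖ ^ 2) / 2 * ‖u - q T‖ ^ 2 := by positivity
  linarith
end
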